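/- Let k ≥ 1 and let α = (α₁, …, α_r) be a partition of ℓ. Let n and n' be integers with n ≥ k + α₁, n' ≥ k + α₁, n − ℓ ≥ α₁ and n' − ℓ ≥ α₁, and let λ be the partition (n − ℓ, α₁, …, α_r) of n and λ' the partition (n' − ℓ, α₁, …, α_r) of n'. Then the number of Kronecker tableaux of length k, initial shape (n) and final shape λ equals the number of Kronecker tableaux of length k, initial shape (n') and final shape λ'; that is, in the stable range the cardinality |KT^k_{(n),λ}| depends only on k and on the truncated partition λ̄ = α. -/

import Mathlib

open Finset

namespace KroneckerPaper

/-- A (removable) corner of a Young diagram: a cell with no cell below it nor to its right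
(in English notation; equivalently, in French notation, a cell at the right end of its row
with no cell above it). -/
def IsCorner (μ : YoungDiagram) (c : ℕ × ℕ) : Prop :=
  c ∈ μ ∧ (c.1 + 1, c.2) ∉ μ ∧ (c.1, c.2 + 1) ∉ μ

/-- The *first corner* of a Young diagram: the unique corner lying on a row of maximal
length. -/
def IsFirstCorner (μ : YoungDiagram) (c : ℕ × ℕ) : Prop :=
  IsCorner μ c ∧ μ.rowLen c.1 = μ.rowLen 0

/-- `μ'` is obtained from `μ` by adding one new cell which is a corner of `μ'`. -/
def AddCorner (μ μ' : YoungDiagram) : Prop :=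
  ∃ c, IsCorner μ' c ∧ c ∉ μ.cells ∧ μ'.cells = insert c μ.cells

/-- `μ'` is obtained from `μ` by removing one corner of `μ`. -/
def RemoveCorner (μ μ' : YoungDiagram) : Prop :=
  ∃ c, IsCorner μ c ∧ μ'.cells = μ.cells.erase c

/-- `μ' ≠ μ` *differs from `μ` by the position of a corner*: it is obtained from `μ` by
removing a corner of `μ` and adding a new cell which is a corner of `μ'`. -/
def MoveCorner (μ μ' : YoungDiagram) : Prop :=
  μ' ≠ μ ∧ ∃ c c', IsCorner μ c ∧ IsCorner μ' c' ∧ c' ∉ μ.cells.erase c ∧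
    μ'.cells = insert c' (μ.cells.erase c)

/-- The one-row Young diagram `(n)`. -/
def rowDiagram (n : ℕ) : YoungDiagram :=
  YoungDiagram.ofRowLens [n] (List.pairwise_singleton _ n).sortedGE

/-- The Young diagram obtained by deleting the first (longest) row, i.e. the truncated
partition `λ̄ = (λ₂, …, λ_m)` of `λ = (λ₁, λ₂, …, λ_m)`. -/
def truncate (μ : YoungDiagram) : YoungDiagram where
  cells := (μ.cells.filter fun c => 1 ≤ c.1).image fun c => (c.1 - 1, c.2)
  isLowerSet := by
    rintro ⟨i1, j1⟩ ⟨i2, j2⟩ ⟨hi, hj⟩ h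
    simp only [Finset.coe_image, Finset.coe_filter, Set.mem_image, Set.mem_setOf_eq,
      Finset.mem_coe, YoungDiagram.mem_cells] at h ⊢
    obtain ⟨⟨a, b⟩, ⟨ha, ha1⟩, heq⟩ := h
    simp only [Prod.mk.injEq] at heq
    exact ⟨(i2 + 1, j2), ⟨μ.up_left_mem (by omega) (by omega) ha, by omega⟩, by simp⟩

/-- A *Kronecker tableau* of length `k`, initial shape `μ` and final shape `lam`:
a sequence `μ⁰ = μ, μ¹, …, μ^k = lam` of diagrams such that each `μ^{i+1}` either differs
from `μ^i` by the position of a corner, or equals `μ^i` together with the datum of a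
distinguished corner of `μ^{i+1}` other than its first corner. -/
structure KroneckerTableau (k : ℕ) (μ lam : YoungDiagram) where
  seq : Fin (k + 1) → YoungDiagram
  dist : Fin k → Option (ℕ × ℕ)
  init : seq 0 = μ
  final : seq (Fin.last k) = lam
  step : ∀ i : Fin k,
    (MoveCorner (seq i.castSucc) (seq i.succ) ∧ dist i = none) ∨
    (seq i.succ = seq i.castSucc ∧
      ∃ c, dist i = some c ∧ IsCorner (seq i.succ) c ∧ ¬ IsFirstCorner (seq i.succ) c)

/-- A *partial standard tableau* of shape `α` with labels in `{1, …, k}`: a labelling of the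
cells of `α` by pairwise distinct integers of `{1, …, k}` increasing along rows and columns
(cells outside `α` are labelled `0` by convention). -/
structure PartialST (α : YoungDiagram) (k : ℕ) where
  label : ℕ × ℕ → ℕ
  mem_of_cell : ∀ c ∈ α, label c ∈ Finset.Icc 1 k
  zero_of_not_cell : ∀ c, c ∉ α → label c = 0
  injOn : ∀ c ∈ α, ∀ c' ∈ α, label c = label c' → c = c'
  row_incr : ∀ i j1 j2 : ℕ, j1 < j2 → (i, j2) ∈ α → label (i, j1) < label (i, j2)
  col_incr : ∀ i1 i2 j : ℕ, i1 < i2 → (i2, j) ∈ α → label (i1, j) < label (i2, j)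

/-- `f^α`, the number of standard Young tableaux of shape `α`. -/
noncomputable def fSYT (α : YoungDiagram) : ℕ :=
  Nat.card (PartialST α α.card)

/-- `p₂ n k`: the number of partitions of an `n`-element set into exactly `k` blocks, each of
size at least `2` (associated Stirling numbers of the second kind). -/
noncomputable def p2 (n k : ℕ) : ℕ :=
  Nat.card {P : Finpartition (Finset.univ : Finset (Fin n)) //
    P.parts.card = k ∧ ∀ b ∈ P.parts, 2 ≤ b.card}

/-- Every non-trivial cycle of `π` is *decreasing*: `π x < x` for every element `x` of a
non-trivial cycle which is not the minimum of its cycle. -/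
def DecCycles {S : Type*} [LinearOrder S] (π : Equiv.Perm S) : Prop :=
  ∀ x, π x ≠ x → (∃ y, π.SameCycle x y ∧ y < x) → π x < x

/-- A pair `(T, π)` of a partial standard tableau of shape `α` with labels in `{1, …, k}`
and a permutation `π` of `{1, …, k}` all of whose non-trivial cycles are decreasing, such
that every fixed point of `π` is a label of `T` and every label of `T` is the greatest
element of its cycle in `π`. -/
structure TabPerm (k : ℕ) (α : YoungDiagram) where
  T : PartialST α k
  π : Equiv.Perm ℕ
  perm_of : ∀ x : ℕ, x ∉ Finset.Icc 1 k → π x = x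
  dec : DecCycles π
  fix_mem : ∀ x ∈ Finset.Icc 1 k, π x = x → ∃ c ∈ α, T.label c = x
  label_max : ∀ c ∈ α, ∀ y : ℕ, π.SameCycle (T.label c) y → y ≤ T.label c

/-!
A partition `μ` of `n` is determined by `n` and the truncation `μ̄`, so a Kronecker tableau can be
recorded by the truncations of its shapes. Moving a corner of `μ` means, on `μ̄`, adding a cell,
removing a cell, or doing both, the first row of `μ` absorbing the difference. The corners of `μ`
other than the first one are the corners of `μ̄`, provided the first row of `μ` is strictly longer
than the second. The truncated rules do not mention `n`. Conversely, the `i`-th truncated shape `β`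
of a sequence running from `β₀` to `α` satisfies `|β| ≤ |β₀| + i` and `β₁ ≤ α₁ + (k - i)`, so as
soon as `n ≥ |β₀| + k + α₁` there is room for a first row above it, and one of these inequalities
is strict along a stationary step, which makes that row strictly the longest.
-/

/-- The cell directly below a given one. A cell `c` of `truncate μ` is the cell `cellBelow c`
of `μ`. -/
def cellBelow : ℕ × ℕ ↪ ℕ × ℕ where
  toFun c := (c.1 + 1, c.2)
  inj' := by
    rintro ⟨i, j⟩ ⟨i', j'⟩ h
    simpa using h

@[simp]
theorem cellBelow_apply (c : ℕ × ℕ) : cellBelow c = (c.1 + 1, c.2) := rfl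

theorem mem_truncate {μ : YoungDiagram} {c : ℕ × ℕ} : c ∈ truncate μ ↔ cellBelow c ∈ μ := by
  rw [← YoungDiagram.mem_cells]
  simp only [truncate, mem_image, mem_filter, YoungDiagram.mem_cells]
  constructor
  · rintro ⟨⟨_ | i, j⟩, ⟨hmem, hpos⟩, rfl⟩
    · simp at hpos
    · exact hmem
  · exact fun hmem => ⟨cellBelow c, ⟨hmem, Nat.le_add_left 1 c.1⟩, rfl⟩

theorem rowLen_truncate (μ : YoungDiagram) (i : ℕ) :
    (truncate μ).rowLen i = μ.rowLen (i + 1) :=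
  eq_of_forall_lt_iff fun _ => by
    rw [← YoungDiagram.mem_iff_lt_rowLen, ← YoungDiagram.mem_iff_lt_rowLen]
    exact mem_truncate

theorem cells_sdiff_eq_union (μ ν : YoungDiagram) :
    μ.cells \ ν.cells = {0} ×ˢ Ico (ν.rowLen 0) (μ.rowLen 0) ∪
      ((truncate μ).cells \ (truncate ν).cells).map cellBelow := by
  ext ⟨i, j⟩
  rcases i with _ | i
  · simp [YoungDiagram.mem_iff_lt_rowLen, and_comm]
  · simp [mem_truncate]

theorem card_cells_sdiff (μ ν : YoungDiagram) :
    #(μ.cells \ ν.cells) =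
      (μ.rowLen 0 - ν.rowLen 0) + #((truncate μ).cells \ (truncate ν).cells) := by
  rw [cells_sdiff_eq_union, card_union_of_disjoint, card_map, card_product, card_singleton,
    one_mul, Nat.card_Ico]
  simp only [disjoint_left, mem_product, mem_singleton, mem_map, not_exists, not_and]
  rintro _ ⟨hrow, -⟩ c - rfl
  exact Nat.succ_ne_zero c.1 hrow

theorem card_eq_rowLen_add_card_truncate (μ : YoungDiagram) :
    μ.card = μ.rowLen 0 + (truncate μ).card := by
  have truncate_bot : truncate ⊥ = ⊥ := by
    ext c
    simp [mem_truncate]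
  have rowLen_bot : (⊥ : YoungDiagram).rowLen 0 = 0 := by
    simp [YoungDiagram.rowLen_eq_card, YoungDiagram.row]
  simpa [truncate_bot, rowLen_bot] using card_cells_sdiff μ ⊥

theorem eq_of_truncate_eq_of_card_eq {μ ν : YoungDiagram} (htrunc : truncate μ = truncate ν)
    (hcard : μ.card = ν.card) : μ = ν := by
  have hrow : μ.rowLen 0 = ν.rowLen 0 := by
    rw [card_eq_rowLen_add_card_truncate μ, card_eq_rowLen_add_card_truncate ν, htrunc] at hcard
    exact Nat.add_right_cancel hcard
  ext ⟨_ | i, j⟩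
  · simp only [YoungDiagram.mem_cells, YoungDiagram.mem_iff_lt_rowLen, hrow]
  · simp only [YoungDiagram.mem_cells, YoungDiagram.mem_iff_lt_rowLen, ← rowLen_truncate, htrunc]

theorem truncate_rowDiagram (n : ℕ) : truncate (rowDiagram n) = ⊥ := by
  ext c
  simp [mem_truncate, rowDiagram, YoungDiagram.mem_ofRowLens]

theorem card_rowDiagram (n : ℕ) : (rowDiagram n).card = n := by
  have hrow : (rowDiagram n).rowLen 0 = n :=
    YoungDiagram.rowLen_ofRowLens (w := [n]) ⟨0, Nat.one_pos⟩
  rw [card_eq_rowLen_add_card_truncate, truncate_rowDiagram, hrow]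
  simp

theorem sortedGE_cons_rowLens {m : ℕ} {β : YoungDiagram} (h : β.rowLen 0 ≤ m) :
    (m :: β.rowLens).SortedGE := by
  refine (List.pairwise_cons.2 ⟨fun x hx => ?_, β.rowLens_sorted.pairwise⟩).sortedGE
  obtain ⟨i, -, rfl⟩ := List.mem_map.1 hx
  exact (β.rowLen_anti 0 i (Nat.zero_le i)).trans h

/-- The padded partition `β[n] = (n - |β|, β₁, β₂, …)` of `n`. -/
def padded (n : ℕ) (β : YoungDiagram) (h : β.card + β.rowLen 0 ≤ n) : YoungDiagram :=
  YoungDiagram.ofRowLens ((n - β.card) :: β.rowLens)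
    (sortedGE_cons_rowLens (Nat.le_sub_of_add_le' h))

theorem truncate_padded {n : ℕ} {β : YoungDiagram} (h : β.card + β.rowLen 0 ≤ n) :
    truncate (padded n β h) = β := by
  conv_rhs => rw [← β.ofRowLens_to_rowLens_eq_self]
  ext c
  rw [YoungDiagram.mem_cells, mem_truncate, YoungDiagram.mem_cells, padded]
  simp [YoungDiagram.mem_ofRowLens]

theorem rowLen_padded {n : ℕ} {β : YoungDiagram} (h : β.card + β.rowLen 0 ≤ n) :
    (padded n β h).rowLen 0 = n - β.card :=
  YoungDiagram.rowLen_ofRowLens (w := (n - β.card) :: β.rowLens) ⟨0, Nat.succ_pos _⟩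

theorem card_padded {n : ℕ} {β : YoungDiagram} (h : β.card + β.rowLen 0 ≤ n) :
    (padded n β h).card = n := by
  rw [card_eq_rowLen_add_card_truncate, truncate_padded, rowLen_padded]
  omega

theorem isCorner_truncate {μ : YoungDiagram} {c : ℕ × ℕ} :
    IsCorner (truncate μ) c ↔ IsCorner μ (cellBelow c) := by
  simp only [IsCorner, mem_truncate]
  rfl

theorem IsCorner.exists_isCorner_truncate {μ : YoungDiagram} {c : ℕ × ℕ} (hc : IsCorner μ c)
    (hfirst : ¬ IsFirstCorner μ c) : ∃ d, cellBelow d = c ∧ IsCorner (truncate μ) d := by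
  obtain ⟨_ | i, j⟩ := c
  · exact absurd ⟨hc, rfl⟩ hfirst
  · exact ⟨(i, j), rfl, isCorner_truncate.2 hc⟩

theorem not_isFirstCorner_cellBelow {μ : YoungDiagram} (h : μ.rowLen 1 < μ.rowLen 0)
    (c : ℕ × ℕ) : ¬ IsFirstCorner μ (cellBelow c) := fun hfirst =>
  ((μ.rowLen_anti 1 (c.1 + 1) (Nat.le_add_left 1 c.1)).trans_lt h).ne hfirst.2

theorem isCorner_of_sdiff_eq_singleton {μ ν : YoungDiagram} {c : ℕ × ℕ}
    (h : μ.cells \ ν.cells = {c}) : IsCorner μ c := by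
  have hsdiff (d : ℕ × ℕ) : d ∈ μ ∧ d ∉ ν ↔ d = c := by
    simpa using Finset.ext_iff.1 h d
  obtain ⟨hμ, hν⟩ := (hsdiff c).2 rfl
  have hmax (d : ℕ × ℕ) (hcd : c < d) : d ∉ μ := fun hd =>
    hcd.ne' ((hsdiff d).1 ⟨hd, fun hd' => hν (ν.isLowerSet hcd.le hd')⟩)
  exact ⟨hμ, hmax _ (Prod.mk_lt_mk_of_lt_of_le (Nat.lt_succ_self _) le_rfl),
    hmax _ (Prod.mk_lt_mk_of_le_of_lt le_rfl (Nat.lt_succ_self _))⟩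

theorem moveCorner_iff {μ ν : YoungDiagram} :
    MoveCorner μ ν ↔ #(μ.cells \ ν.cells) = 1 ∧ #(ν.cells \ μ.cells) = 1 := by
  constructor
  · rintro ⟨hne, c, c', ⟨hc, -⟩, -, hc', hν⟩
    rw [← YoungDiagram.mem_cells] at hc
    have hcc' : c' ≠ c := by
      rintro rfl
      exact hne (YoungDiagram.ext (hν.trans (insert_erase hc)))
    exact ⟨card_eq_one.2 ⟨c, by grind⟩, card_eq_one.2 ⟨c', by grind⟩⟩
  · rintro ⟨hμν, hνμ⟩
    obtain ⟨c, hc⟩ := card_eq_one.1 hμν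
    obtain ⟨c', hc'⟩ := card_eq_one.1 hνμ
    have hnew : c' ∉ μ.cells := (mem_sdiff.1 (hc' ▸ mem_singleton_self c')).2
    have hcells : ν.cells = insert c' (μ.cells.erase c) := by
      rw [insert_eq, ← hc', ← sdiff_singleton_eq_erase, ← hc, sdiff_sdiff_right_self, inf_eq_inter,
        inter_comm, sdiff_union_inter]
    refine ⟨?_, c, c', isCorner_of_sdiff_eq_singleton hc, isCorner_of_sdiff_eq_singleton hc',
      fun h => hnew (mem_of_mem_erase h), hcells⟩
    rintro rfl
    simp at hμν

theorem MoveCorner.card_eq {μ ν : YoungDiagram} (h : MoveCorner μ ν) : μ.card = ν.card := by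
  rw [moveCorner_iff] at h
  exact card_sdiff_eq_card_sdiff_iff.1 (h.1.trans h.2.symm)

/-- `β` and `γ` differ by adding a cell, removing a cell, or both: the trace of a corner move on
truncated diagrams, where the first row is the source or the destination in the first two cases. -/
def TruncatedMove (β γ : YoungDiagram) : Prop :=
  max #(β.cells \ γ.cells) #(γ.cells \ β.cells) = 1

theorem moveCorner_iff_truncatedMove {μ ν : YoungDiagram} (h : μ.card = ν.card) :
    MoveCorner μ ν ↔ TruncatedMove (truncate μ) (truncate ν) := by
  have hcells : #(μ.cells \ ν.cells) = #(ν.cells \ μ.cells) := card_sdiff_comm h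
  have hμν := card_cells_sdiff μ ν
  have hνμ := card_cells_sdiff ν μ
  rw [moveCorner_iff, TruncatedMove]
  omega

theorem TruncatedMove.card_le {β γ : YoungDiagram} (h : TruncatedMove β γ) :
    γ.card ≤ β.card + 1 :=
  calc γ.card ≤ #(γ.cells \ β.cells) + β.card := card_le_card_sdiff_add_card
    _ ≤ 1 + β.card := Nat.add_le_add_right ((le_max_right _ _).trans_eq h) _
    _ = β.card + 1 := Nat.add_comm _ _

theorem TruncatedMove.rowLen_le {β γ : YoungDiagram} (h : TruncatedMove β γ) :
    β.rowLen 0 ≤ γ.rowLen 0 + 1 := by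
  have hsdiff := card_cells_sdiff β γ
  rw [TruncatedMove] at h
  omega

/-- The sequence of truncations of the diagrams of a Kronecker tableau, together with its
distinguished corners. The latter are recorded as cells of the diagrams before truncation, so that
truncating a tableau leaves `dist` unchanged. -/
@[ext]
structure TruncatedTableau (k : ℕ) (β α : YoungDiagram) where
  seq : Fin (k + 1) → YoungDiagram
  dist : Fin k → Option (ℕ × ℕ)
  init : seq 0 = β
  final : seq (Fin.last k) = α
  step : ∀ i : Fin k,
    (TruncatedMove (seq i.castSucc) (seq i.succ) ∧ dist i = none) ∨
    (seq i.succ = seq i.castSucc ∧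
      ∃ c, dist i = some (cellBelow c) ∧ IsCorner (seq i.succ) c)

namespace TruncatedTableau

variable {k : ℕ} {β α : YoungDiagram} (R : TruncatedTableau k β α)

theorem card_seq_le (i : Fin (k + 1)) : (R.seq i).card ≤ β.card + i := by
  induction i using Fin.induction with
  | zero => rw [R.init]; exact Nat.le_add_right _ _
  | succ i ih =>
    simp only [Fin.val_succ, Fin.val_castSucc] at ih ⊢
    rcases R.step i with ⟨hmove, -⟩ | ⟨hstay, -⟩
    · have := hmove.card_le
      omega
    · rw [hstay]
      omega

theorem rowLen_seq_add_le (i : Fin (k + 1)) : (R.seq i).rowLen 0 + i ≤ k + α.rowLen 0 := by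
  induction i using Fin.reverseInduction with
  | last => rw [R.final, Fin.val_last, Nat.add_comm]
  | cast i ih =>
    simp only [Fin.val_succ, Fin.val_castSucc] at ih ⊢
    rcases R.step i with ⟨hmove, -⟩ | ⟨hstay, -⟩
    · have := hmove.rowLen_le
      omega
    · rw [← hstay]
      omega

theorem card_add_rowLen_seq_le (i : Fin (k + 1)) :
    (R.seq i).card + (R.seq i).rowLen 0 ≤ β.card + k + α.rowLen 0 := by
  have := R.card_seq_le i
  have := R.rowLen_seq_add_le i
  omega

theorem card_add_rowLen_seq_lt {i : Fin k} (hstay : R.seq i.succ = R.seq i.castSucc) :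
    (R.seq i.succ).card + (R.seq i.succ).rowLen 0 < β.card + k + α.rowLen 0 := by
  have hcard := R.card_seq_le i.castSucc
  have hrow := R.rowLen_seq_add_le i.succ
  rw [← hstay, Fin.val_castSucc] at hcard
  rw [Fin.val_succ] at hrow
  omega

end TruncatedTableau

/-- The Kronecker tableau of partitions of `μ.card` obtained by padding every diagram of a
truncated tableau. -/
def TruncatedTableau.pad {k : ℕ} {μ lam : YoungDiagram}
    (R : TruncatedTableau k (truncate μ) (truncate lam)) (hcard : lam.card = μ.card)
    (hstable : (truncate μ).card + k + (truncate lam).rowLen 0 ≤ μ.card) :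
    KroneckerTableau k μ lam where
  seq i := padded μ.card (R.seq i) ((R.card_add_rowLen_seq_le i).trans hstable)
  dist := R.dist
  init := eq_of_truncate_eq_of_card_eq ((truncate_padded _).trans R.init) (card_padded _)
  final := eq_of_truncate_eq_of_card_eq ((truncate_padded _).trans R.final)
    ((card_padded _).trans hcard.symm)
  step i := by
    rcases R.step i with ⟨hmove, hnone⟩ | ⟨hstay, c, hsome, hcorner⟩
    · left
      rw [moveCorner_iff_truncatedMove ((card_padded _).trans (card_padded _).symm),
        truncate_padded, truncate_padded]
      exact ⟨hmove, hnone⟩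
    · refine Or.inr ⟨by simp only [hstay], cellBelow c, hsome, ?_, ?_⟩
      · rwa [← isCorner_truncate, truncate_padded]
      · apply not_isFirstCorner_cellBelow
        rw [← rowLen_truncate, truncate_padded, rowLen_padded]
        have := (R.card_add_rowLen_seq_lt hstay).trans_le hstable
        omega

namespace KroneckerTableau

variable {k : ℕ} {μ lam : YoungDiagram}

theorem card_seq (K : KroneckerTableau k μ lam) (i : Fin (k + 1)) : (K.seq i).card = μ.card := by
  induction i using Fin.induction with
  | zero => rw [K.init]
  | succ i ih =>
    rcases K.step i with ⟨hmove, -⟩ | ⟨hstay, -⟩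
    · rw [← hmove.card_eq, ih]
    · rw [hstay, ih]

/-- The truncated tableau obtained by deleting the first row of every diagram. -/
def truncated (K : KroneckerTableau k μ lam) :
    TruncatedTableau k (truncate μ) (truncate lam) where
  seq i := truncate (K.seq i)
  dist := K.dist
  init := congrArg truncate K.init
  final := congrArg truncate K.final
  step i := by
    rcases K.step i with ⟨hmove, hnone⟩ | ⟨hstay, c, hsome, hcorner, hfirst⟩
    · exact Or.inl ⟨(moveCorner_iff_truncatedMove hmove.card_eq).1 hmove, hnone⟩
    · obtain ⟨d, rfl, hd⟩ := hcorner.exists_isCorner_truncate hfirst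
      exact Or.inr ⟨congrArg truncate hstay, d, hsome, hd⟩

variable (hcard : lam.card = μ.card)
  (hstable : (truncate μ).card + k + (truncate lam).rowLen 0 ≤ μ.card)

theorem truncate_seq_pad (R : TruncatedTableau k (truncate μ) (truncate lam)) (i : Fin (k + 1)) :
    truncate ((R.pad hcard hstable).seq i) = R.seq i :=
  truncate_padded ((R.card_add_rowLen_seq_le i).trans hstable)

theorem truncated_pad (R : TruncatedTableau k (truncate μ) (truncate lam)) :
    (R.pad hcard hstable).truncated = R :=
  TruncatedTableau.ext (funext (truncate_seq_pad hcard hstable R)) rfl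

theorem pad_truncated (K : KroneckerTableau k μ lam) : K.truncated.pad hcard hstable = K := by
  have hseq : (K.truncated.pad hcard hstable).seq = K.seq := funext fun i =>
    eq_of_truncate_eq_of_card_eq (truncate_seq_pad hcard hstable K.truncated i)
      ((card_seq _ i).trans (K.card_seq i).symm)
  cases K
  exact (mk.injEq ..).mpr ⟨hseq, rfl⟩

/-- Truncation as a bijection from Kronecker tableaux to truncated tableaux. -/
def truncatedEquiv : KroneckerTableau k μ lam ≃ TruncatedTableau k (truncate μ) (truncate lam) where
  toFun := truncated
  invFun R := R.pad hcard hstable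
  left_inv := pad_truncated hcard hstable
  right_inv := truncated_pad hcard hstable

end KroneckerTableau

theorem statement1_general {k : ℕ} {μ μ' lam lam' : YoungDiagram}
    (hμ : truncate μ = truncate μ') (hlam : truncate lam = truncate lam')
    (hcard : lam.card = μ.card) (hcard' : lam'.card = μ'.card)
    (hstable : (truncate μ).card + k + (truncate lam).rowLen 0 ≤ μ.card)
    (hstable' : (truncate μ').card + k + (truncate lam').rowLen 0 ≤ μ'.card) :
    Nat.card (KroneckerTableau k μ lam) = Nat.card (KroneckerTableau k μ' lam') := by
  rw [Nat.card_congr (KroneckerTableau.truncatedEquiv hcard hstable),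
    Nat.card_congr (KroneckerTableau.truncatedEquiv hcard' hstable'), hμ, hlam]

/-- In the stable range, the number of Kronecker tableaux of length `k`, initial shape `(n)`
and final shape `λ = (n - ℓ, α₁, …, α_r)` depends only on `k` and on the truncated partition
`λ̄ = α`. -/
theorem statement1 (k ℓ n n' : ℕ) (hk : 1 ≤ k) (α lam lam' : YoungDiagram)
    (hα : α.card = ℓ) (hn : lam.card = n) (hn' : lam'.card = n')
    (ht : truncate lam = α) (ht' : truncate lam' = α)
    (h1 : k + α.rowLen 0 ≤ n) (h1' : k + α.rowLen 0 ≤ n')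
    (h2 : α.rowLen 0 ≤ n - ℓ) (h2' : α.rowLen 0 ≤ n' - ℓ) :
    Nat.card (KroneckerTableau k (rowDiagram n) lam) =
      Nat.card (KroneckerTableau k (rowDiagram n') lam') := by
  have hbot (m : ℕ) : (truncate (rowDiagram m)).card = 0 := by
    rw [truncate_rowDiagram, YoungDiagram.card, YoungDiagram.cells_bot, card_empty]
  apply statement1_general
  · rw [truncate_rowDiagram, truncate_rowDiagram]
  · rw [ht, ht']
  · rw [hn, card_rowDiagram]
  · rw [hn', card_rowDiagram]
  · rwa [hbot, zero_add, ht, card_rowDiagram]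
  · rwa [hbot, zero_add, ht', card_rowDiagram]

end KroneckerPaper
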